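/- arXiv:1701.06597 — 2 statements merged into one kernel-verified Lean document; each statement's English description precedes it below -/
import Mathlib

section
/- Let p, s, b be positive integers with b dividing both s and p, and let D ⊆ ℝ^{2p} be the set of vectors t = [t₁; t₂] whose halves t₁, t₂ ∈ ℝ^p are each (s,b) block-sparse. Let F : ℝ^{2p} → ℝ be twice continuously differentiable and suppose F satisfies SRSC/SRSS at level 6s with constants 0 < m ≤ M: for every t ∈ ℝ^{2p} and every index set ξ that is a union of the supports of three elements of D, one has m‖v‖₂² ≤ ⟨v, ∇²F(t) v⟩ ≤ M‖v‖₂² for all v ∈ ℝ^{2p} supported on ξ. Fix a step size η with 1/(2M) < η < 3/(2m), set ρ = 2·√(1 + η²M² − 2ηm), and assume ρ < 1. Let θ ∈ D and let (t^k) be any sequence with t^0 ∈ D and t^{k+1} a Euclidean-norm best approximation in D of t^k − η∇F(t^k). Then for every k ≥ 0, ‖t^k − θ‖₂ ≤ ρ^k ‖t^0 − θ‖₂ + (2η/(1−ρ)) · G, where G is the maximum over index sets J of size at most 6s of ‖(∇F(θ))restricted to J‖₂. -/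
open scoped RealInnerProductSpace

/-- `(v)` restricted to `J`: the vector agreeing with `v` on `J` and zero elsewhere. -/
noncomputable def restrictTo {ι : Type*} [Fintype ι] [DecidableEq ι] (J : Finset ι)
    (v : EuclideanSpace ℝ ι) : EuclideanSpace ℝ ι :=
  (WithLp.equiv 2 _).symm (fun i => if i ∈ J then v i else 0)

/-- `u ∈ ℝ^p` is `(s,b)` block-sparse: with coordinates partitioned into consecutive
blocks of length `b`, the support of `u` is contained in a union of at most `s/b` blocks. -/
def BlockSparse (p s b : ℕ) (u : EuclideanSpace ℝ (Fin p)) : Prop :=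
  ∃ S : Finset ℕ, S.card ≤ s / b ∧ ∀ i : Fin p, u i ≠ 0 → (i : ℕ) / b ∈ S

/-- The set `D ⊆ ℝ^{2p}` of vectors `t = [t₁; t₂]` whose halves are each
`(s,b)` block-sparse. -/
noncomputable def blockSparsePairs (p s b : ℕ) : Set (EuclideanSpace ℝ (Fin p ⊕ Fin p)) :=
  {t | BlockSparse p s b ((WithLp.equiv 2 _).symm (fun i => t (Sum.inl i))) ∧
       BlockSparse p s b ((WithLp.equiv 2 _).symm (fun i => t (Sum.inr i)))}

section helpers
variable {ι : Type*} [Fintype ι] [DecidableEq ι]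

theorem restrictTo_apply' (J : Finset ι) (v : EuclideanSpace ℝ ι) (i : ι) :
    restrictTo J v i = if i ∈ J then v i else 0 := rfl

noncomputable def restrictCLM (J : Finset ι) : EuclideanSpace ℝ ι →L[ℝ] EuclideanSpace ℝ ι :=
  LinearMap.toContinuousLinearMap
    { toFun := restrictTo J
      map_add' := by
        intro x y; ext i; simp only [restrictTo_apply', PiLp.add_apply]; split_ifs <;> simp
      map_smul' := by
        intro c x; ext i
        simp only [restrictTo_apply', PiLp.smul_apply, RingHom.id_apply]; split_ifs <;> simp }

theorem restrictCLM_eq (J : Finset ι) (v : EuclideanSpace ℝ ι) :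
    restrictCLM J v = restrictTo J v := rfl

theorem restrictCLM_apply (J : Finset ι) (v : EuclideanSpace ℝ ι) (i : ι) :
    restrictCLM J v i = if i ∈ J then v i else 0 := rfl

theorem inner_restrict (J : Finset ι) (u v : EuclideanSpace ℝ ι) (hu : ∀ i, i ∉ J → u i = 0) :
    ⟪u, restrictCLM J v⟫ = ⟪u, v⟫ := by
  simp only [PiLp.inner_apply]
  refine Finset.sum_congr rfl fun i _ => ?_
  rw [restrictCLM_apply]
  split_ifs with h
  · rfl
  · simp [hu i h]

theorem gradient_diff (F : EuclideanSpace ℝ ι → ℝ) (hF : ContDiff ℝ 2 F) :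
    Differentiable ℝ (gradient F) := by
  have h1 : Differentiable ℝ (fderiv ℝ F) :=
    (hF.fderiv_right (m := 1) (by norm_num)).differentiable (by norm_num)
  exact ((InnerProductSpace.toDual ℝ (EuclideanSpace ℝ ι)).symm.toContinuousLinearEquiv
    |>.differentiable).comp h1

theorem inner_hess (F : EuclideanSpace ℝ ι → ℝ) (hF : ContDiff ℝ 2 F)
    (t u v : EuclideanSpace ℝ ι) :
    ⟪u, fderiv ℝ (gradient F) t v⟫ = fderiv ℝ (fderiv ℝ F) t v u := by
  have h1 : Differentiable ℝ (fderiv ℝ F) :=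
    (hF.fderiv_right (m := 1) (by norm_num)).differentiable (by norm_num)
  have hg := (gradient_diff F hF t).hasFDerivAt
  have h2 : HasFDerivAt (fun x => ⟪u, gradient F x⟫) ((innerSL ℝ u).comp (fderiv ℝ (gradient F) t)) t :=
    (innerSL ℝ u).hasFDerivAt.comp t hg
  have h3 : HasFDerivAt (fun x => fderiv ℝ F x u)
      ((ContinuousLinearMap.apply ℝ ℝ u).comp (fderiv ℝ (fderiv ℝ F) t)) t :=
    (ContinuousLinearMap.apply ℝ ℝ u).hasFDerivAt.comp t (h1 t).hasFDerivAt
  have h4 : (fun x => ⟪u, gradient F x⟫) = (fun x => fderiv ℝ F x u) := by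
    funext x
    rw [real_inner_comm, gradient, InnerProductSpace.toDual_symm_apply]
  rw [h4] at h2
  have := DFunLike.congr_fun (h2.unique h3) v
  simpa using this

theorem hess_symm (F : EuclideanSpace ℝ ι → ℝ) (hF : ContDiff ℝ 2 F)
    (t u v : EuclideanSpace ℝ ι) :
    ⟪u, fderiv ℝ (gradient F) t v⟫ = ⟪v, fderiv ℝ (gradient F) t u⟫ := by
  rw [inner_hess F hF, inner_hess F hF]
  exact (hF.contDiffAt.isSymmSndFDerivAt (by simp)) v u

theorem contraction (F : EuclideanSpace ℝ ι → ℝ) (hF : ContDiff ℝ 2 F) (J : Finset ι)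
    (m M η : ℝ) (hM : 0 < M) (hm : 0 < m) (hη : 0 < η)
    (h : ∀ t v : EuclideanSpace ℝ ι, (∀ i, i ∉ J → v i = 0) →
        m * ‖v‖ ^ 2 ≤ ⟪v, fderiv ℝ (gradient F) t v⟫ ∧
          ⟪v, fderiv ℝ (gradient F) t v⟫ ≤ M * ‖v‖ ^ 2)
    (x y : EuclideanSpace ℝ ι) (hx : ∀ i, i ∉ J → x i = 0) (hy : ∀ i, i ∉ J → y i = 0) :
    ‖(x - y) - η • restrictCLM J (gradient F x - gradient F y)‖
      ≤ Real.sqrt (1 + η ^ 2 * M ^ 2 - 2 * η * m) * ‖x - y‖ := by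
  set Δ := x - y with hΔ
  have hΔJ : ∀ i, i ∉ J → Δ i = 0 := fun i hi => by simp [hΔ, hx i hi, hy i hi]
  let ψ : ℝ → EuclideanSpace ℝ ι := fun τ => τ • Δ - η • restrictCLM J (gradient F (y + τ • Δ))
  have hder : ∀ τ : ℝ, HasDerivAt ψ
      (Δ - η • restrictCLM J (fderiv ℝ (gradient F) (y + τ • Δ) Δ)) τ := by
    intro τ
    have h1 : HasDerivAt (fun τ : ℝ => τ • Δ) Δ τ := by
      simpa using (hasDerivAt_id τ).smul_const Δ
    have h2 : HasDerivAt (fun τ : ℝ => y + τ • Δ) Δ τ := h1.const_add y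
    have h3 : HasDerivAt (fun τ : ℝ => gradient F (y + τ • Δ))
        (fderiv ℝ (gradient F) (y + τ • Δ) Δ) τ :=
      (gradient_diff F hF _).hasFDerivAt.comp_hasDerivAt τ h2
    have h4 : HasDerivAt (fun τ : ℝ => restrictCLM J (gradient F (y + τ • Δ)))
        (restrictCLM J (fderiv ℝ (gradient F) (y + τ • Δ) Δ)) τ :=
      (restrictCLM J).hasFDerivAt.comp_hasDerivAt τ h3
    exact h1.sub (h4.const_smul η)
  have hbound : ∀ τ : ℝ, ‖Δ - η • restrictCLM J (fderiv ℝ (gradient F) (y + τ • Δ) Δ)‖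
      ≤ Real.sqrt (1 + η ^ 2 * M ^ 2 - 2 * η * m) * ‖Δ‖ := by
    intro τ
    set z := y + τ • Δ
    set w := restrictCLM J (fderiv ℝ (gradient F) z Δ) with hw
    have hwJ : ∀ i, i ∉ J → w i = 0 := fun i hi => by rw [hw, restrictCLM_apply, if_neg hi]
    have hww : ‖w‖ ^ 2 = ⟪w, fderiv ℝ (gradient F) z Δ⟫ := by
      rw [← inner_restrict J w _ hwJ, ← hw, real_inner_self_eq_norm_sq]
    have hΔw : ⟪Δ, w⟫ = ⟪Δ, fderiv ℝ (gradient F) z Δ⟫ := inner_restrict J _ _ hΔJ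
    have hsym := hess_symm F hF z w Δ
    have hA := (h z w hwJ).2
    have hB := h z Δ hΔJ
    have hC := (h z (w - M • Δ) (fun i hi => by simp [hwJ i hi, hΔJ i hi])).1
    have hC' : 0 ≤ ⟪w - M • Δ, fderiv ℝ (gradient F) z (w - M • Δ)⟫ :=
      le_trans (by positivity) hC
    simp only [map_sub, map_smul, inner_sub_left, inner_sub_right, inner_smul_left,
      inner_smul_right, ← hsym, ← hww] at hC'
    simp only [conj_trivial] at hC'
    have hwn : ‖w‖ ^ 2 ≤ M ^ 2 * ‖Δ‖ ^ 2 := by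
      have h5 : M * ‖w‖ ^ 2 ≤ M * (M ^ 2 * ‖Δ‖ ^ 2) := by
        nlinarith [mul_le_mul_of_nonneg_left hB.2 (sq_nonneg M)]
      exact le_of_mul_le_mul_left h5 hM
    have hsq : ‖Δ - η • w‖ ^ 2 ≤ (1 + η ^ 2 * M ^ 2 - 2 * η * m) * ‖Δ‖ ^ 2 := by
      rw [norm_sub_sq_real, inner_smul_right, hΔw, norm_smul, mul_pow, Real.norm_eq_abs, sq_abs]
      nlinarith [mul_le_mul_of_nonneg_left hwn (sq_nonneg η),
        mul_le_mul_of_nonneg_left hB.1 hη.le]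
    have := Real.le_sqrt_of_sq_le hsq
    rwa [Real.sqrt_mul' _ (sq_nonneg _), Real.sqrt_sq (norm_nonneg _)] at this
  have hmv := norm_image_sub_le_of_norm_deriv_le_segment_01' (f := ψ)
    (fun τ _ => (hder τ).hasDerivWithinAt) (fun τ _ => hbound τ)
  have e : ψ 1 - ψ 0 = Δ - η • restrictCLM J (gradient F x - gradient F y) := by
    have h1 : y + (1 : ℝ) • Δ = x := by rw [hΔ, one_smul]; abel
    have h0 : y + (0 : ℝ) • Δ = y := by rw [zero_smul, add_zero]
    simp only [ψ]
    rw [h1, h0, one_smul, zero_smul, map_sub, smul_sub]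
    abel
  rwa [e] at hmv

end helpers

theorem block_card (p s b : ℕ) (hb : 0 < b) (hbs : b ∣ s) (u : EuclideanSpace ℝ (Fin p))
    (hu : BlockSparse p s b u) : (Finset.univ.filter fun i => u i ≠ 0).card ≤ s := by
  obtain ⟨S, hS, h⟩ := hu
  have h1 : (Finset.univ.filter fun i => u i ≠ 0).card ≤ (S ×ˢ Finset.range b).card := by
    refine Finset.card_le_card_of_injOn (fun i : Fin p => ((i : ℕ) / b, (i : ℕ) % b)) ?_ ?_
    · intro i hi
      have hi' : u i ≠ 0 := by simpa using hi
      simp [h i hi', Nat.mod_lt _ hb]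
    · intro i _ j _ hij
      simp only [Prod.mk.injEq] at hij
      apply Fin.ext
      rw [← Nat.div_add_mod (i : ℕ) b, ← Nat.div_add_mod (j : ℕ) b, hij.1, hij.2]
  rw [Finset.card_product, Finset.card_range] at h1
  calc _ ≤ _ := h1
    _ ≤ s / b * b := Nat.mul_le_mul_right _ hS
    _ = s := Nat.div_mul_cancel hbs

theorem pair_card (p s b : ℕ) (hb : 0 < b) (hbs : b ∣ s)
    (u : EuclideanSpace ℝ (Fin p ⊕ Fin p)) (hu : u ∈ blockSparsePairs p s b) :
    (Finset.univ.filter fun i => u i ≠ 0).card ≤ 2 * s := by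
  have h1 := block_card p s b hb hbs _ hu.1
  have h2 := block_card p s b hb hbs _ hu.2
  have e : (Finset.univ.filter fun i => u i ≠ 0) =
      (Finset.univ.filter fun i : Fin p => u (Sum.inl i) ≠ 0).disjSum
        (Finset.univ.filter fun i : Fin p => u (Sum.inr i) ≠ 0) := by
    ext i
    cases i <;> simp
  rw [e, Finset.card_disjSum]
  have h1' : (Finset.univ.filter fun i : Fin p => u (Sum.inl i) ≠ 0).card ≤ s := h1
  have h2' : (Finset.univ.filter fun i : Fin p => u (Sum.inr i) ≠ 0).card ≤ s := h2
  omega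

theorem struct_dht_convergence
    (p s b : ℕ) (hp : 0 < p) (hs : 0 < s) (hb : 0 < b) (hbs : b ∣ s) (hbp : b ∣ p)
    (F : EuclideanSpace ℝ (Fin p ⊕ Fin p) → ℝ) (hF : ContDiff ℝ 2 F)
    (m M : ℝ) (hm : 0 < m) (hmM : m ≤ M)
    -- SRSC/SRSS at level 6s: for every t and every ξ which is a union of
    -- the supports of three elements of D, and every v supported on ξ,
    -- m‖v‖² ≤ ⟨v, ∇²F(t) v⟩ ≤ M‖v‖².
    (hSRSC : ∀ (t d₁ d₂ d₃ : EuclideanSpace ℝ (Fin p ⊕ Fin p)),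
      d₁ ∈ blockSparsePairs p s b → d₂ ∈ blockSparsePairs p s b →
      d₃ ∈ blockSparsePairs p s b →
      ∀ v : EuclideanSpace ℝ (Fin p ⊕ Fin p),
        (∀ i, d₁ i = 0 → d₂ i = 0 → d₃ i = 0 → v i = 0) →
        m * ‖v‖ ^ 2 ≤ ⟪v, fderiv ℝ (gradient F) t v⟫ ∧
          ⟪v, fderiv ℝ (gradient F) t v⟫ ≤ M * ‖v‖ ^ 2)
    (η : ℝ) (hη₁ : 1 / (2 * M) < η) (hη₂ : η < 3 / (2 * m))
    (ρ : ℝ) (hρdef : ρ = 2 * Real.sqrt (1 + η ^ 2 * M ^ 2 - 2 * η * m)) (hρ : ρ < 1)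
    (θ : EuclideanSpace ℝ (Fin p ⊕ Fin p)) (hθ : θ ∈ blockSparsePairs p s b)
    (t : ℕ → EuclideanSpace ℝ (Fin p ⊕ Fin p))
    (ht0 : t 0 ∈ blockSparsePairs p s b)
    -- t^{k+1} is a Euclidean-norm best approximation in D of t^k − η∇F(t^k)
    (hstep : ∀ k : ℕ, t (k + 1) ∈ blockSparsePairs p s b ∧
      ∀ u ∈ blockSparsePairs p s b,
        ‖t (k + 1) - (t k - η • gradient F (t k))‖ ≤ ‖u - (t k - η • gradient F (t k))‖)
    -- G is the maximum over index sets J of size at most 6s of ‖(∇F(θ))|_J‖₂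
    (G : ℝ)
    (hG : IsGreatest {x : ℝ | ∃ J : Finset (Fin p ⊕ Fin p), J.card ≤ 6 * s ∧
      x = ‖restrictTo J (gradient F θ)‖} G) :
    ∀ k : ℕ, ‖t k - θ‖ ≤ ρ ^ k * ‖t 0 - θ‖ + (2 * η / (1 - ρ)) * G := by
  have hM : 0 < M := lt_of_lt_of_le hm hmM
  have hη : 0 < η := lt_trans (by positivity) hη₁
  have hρ0 : 0 ≤ ρ := by rw [hρdef]; positivity
  have hG0 : 0 ≤ G := by
    obtain ⟨J, _, hJ⟩ := hG.1
    rw [hJ]; exact norm_nonneg _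
  have hD : ∀ k, t k ∈ blockSparsePairs p s b := by
    intro k
    cases k with
    | zero => exact ht0
    | succ k => exact (hstep k).1
  have hrec : ∀ k, ‖t (k + 1) - θ‖ ≤ ρ * ‖t k - θ‖ + 2 * η * G := by
    intro k
    let supp : EuclideanSpace ℝ (Fin p ⊕ Fin p) → Finset (Fin p ⊕ Fin p) :=
      fun u => Finset.univ.filter fun i => u i ≠ 0
    let J := supp (t k) ∪ supp (t (k + 1)) ∪ supp θ
    have hJc : J.card ≤ 6 * s := by
      have h1 : (supp (t k)).card ≤ 2 * s := pair_card p s b hb hbs _ (hD k)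
      have h2 : (supp (t (k + 1))).card ≤ 2 * s := pair_card p s b hb hbs _ (hD (k + 1))
      have h3 : (supp θ).card ≤ 2 * s := pair_card p s b hb hbs _ hθ
      have h4 : J.card ≤ (supp (t k) ∪ supp (t (k + 1))).card + (supp θ).card :=
        Finset.card_union_le _ _
      have h5 := Finset.card_union_le (supp (t k)) (supp (t (k + 1)))
      omega
    have hmem : ∀ i, i ∉ J ↔ t k i = 0 ∧ t (k + 1) i = 0 ∧ θ i = 0 := by
      intro i
      simp [J, supp, and_assoc]
    have hx : ∀ i, i ∉ J → t k i = 0 := fun i hi => ((hmem i).1 hi).1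
    have hx' : ∀ i, i ∉ J → t (k + 1) i = 0 := fun i hi => ((hmem i).1 hi).2.1
    have hy : ∀ i, i ∉ J → θ i = 0 := fun i hi => ((hmem i).1 hi).2.2
    have hcon := contraction F hF J m M η hM hm hη
      (fun z v hv => hSRSC z _ _ _ (hD k) (hD (k + 1)) hθ v
        (fun i h1 h2 h3 => hv i ((hmem i).2 ⟨h1, h2, h3⟩))) (t k) θ hx hy
    have hGJ : ‖restrictCLM J (gradient F θ)‖ ≤ G := hG.2 ⟨J, hJc, rfl⟩
    have hbest := (hstep k).2 θ hθ
    set x := t k - η • gradient F (t k) with hxdef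
    have hproj : ‖t (k + 1) - restrictCLM J x‖ ≤ ‖θ - restrictCLM J x‖ := by
      have h1 := pow_le_pow_left₀ (norm_nonneg _) hbest 2
      rw [norm_sub_sq_real (t (k + 1)) x, norm_sub_sq_real θ x, ← inner_restrict J _ x hx',
        ← inner_restrict J _ x hy] at h1
      refine (sq_le_sq₀ (norm_nonneg _) (norm_nonneg _)).1 ?_
      rw [norm_sub_sq_real (t (k + 1)), norm_sub_sq_real θ]
      linarith
    have hPt : restrictCLM J (t k) = t k := by
      ext i
      rw [restrictCLM_apply]
      split_ifs with h
      · rfl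
      · exact (hx i h).symm
    have hdec : restrictCLM J x - θ =
        ((t k - θ) - η • restrictCLM J (gradient F (t k) - gradient F θ))
          - η • restrictCLM J (gradient F θ) := by
      rw [hxdef, map_sub, map_smul, hPt, map_sub, smul_sub]
      abel
    have hmain : ‖θ - restrictCLM J x‖ ≤
        Real.sqrt (1 + η ^ 2 * M ^ 2 - 2 * η * m) * ‖t k - θ‖ + η * G := by
      rw [norm_sub_rev, hdec]
      refine (norm_sub_le _ _).trans (add_le_add hcon ?_)
      rw [norm_smul, Real.norm_eq_abs, abs_of_pos hη]
      exact mul_le_mul_of_nonneg_left hGJ hη.le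
    have htri : ‖t (k + 1) - θ‖ ≤ ‖t (k + 1) - restrictCLM J x‖ + ‖θ - restrictCLM J x‖ := by
      rw [norm_sub_rev θ]
      exact norm_sub_le_norm_sub_add_norm_sub _ _ _
    rw [hρdef]
    linarith
  have h1ρ : 0 < 1 - ρ := by linarith
  have hfix : ρ * (2 * η / (1 - ρ) * G) + 2 * η * G = 2 * η / (1 - ρ) * G := by
    field_simp
    ring
  intro k
  induction k with
  | zero =>
    have : 0 ≤ 2 * η / (1 - ρ) * G := by positivity
    simpa using this
  | succ k ih =>
    have h2 := mul_le_mul_of_nonneg_left ih hρ0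
    have h3 := hrec k
    rw [pow_succ]
    nlinarith
end

section
/- Let 0 < m ≤ M be real numbers with M/m < 2/√3, and set η = m/M². Then 1/(2M) < η < 3/(2m) and 2·√(1 + η²M² − 2ηm) < 1. -/
theorem admissible_step_size
    (m M : ℝ) (hm : 0 < m) (hmM : m ≤ M) (hratio : M / m < 2 / Real.sqrt 3) :
    1 / (2 * M) < m / M ^ 2 ∧ m / M ^ 2 < 3 / (2 * m) ∧
      2 * Real.sqrt (1 + (m / M ^ 2) ^ 2 * M ^ 2 - 2 * (m / M ^ 2) * m) < 1 := by
  have hM : 0 < M := lt_of_lt_of_le hm hmM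
  have h3 : 0 < Real.sqrt 3 := Real.sqrt_pos.mpr (by norm_num)
  have hs : Real.sqrt 3 ^ 2 = 3 := Real.sq_sqrt (by norm_num)
  have h1 : M * Real.sqrt 3 < 2 * m := (div_lt_div_iff₀ hm h3).mp hratio
  have h2 : 3 * M ^ 2 < 4 * m ^ 2 := by
    have h := pow_lt_pow_left₀ h1 (by positivity) two_ne_zero
    rw [mul_pow, hs] at h
    linarith
  have h4 : M < 2 * m := by nlinarith
  refine ⟨?_, ?_, ?_⟩
  · rw [div_lt_div_iff₀ (by positivity) (by positivity)]
    nlinarith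
  · rw [div_lt_div_iff₀ (by positivity) (by positivity)]
    nlinarith
  · have e : 1 + (m / M ^ 2) ^ 2 * M ^ 2 - 2 * (m / M ^ 2) * m = 1 - m ^ 2 / M ^ 2 := by
      field_simp
      ring
    have h5 : 3 / 4 < m ^ 2 / M ^ 2 := by
      rw [div_lt_div_iff₀ (by positivity) (by positivity)]
      linarith
    have h6 : Real.sqrt (1 - m ^ 2 / M ^ 2) < 1 / 2 := by
      rw [Real.sqrt_lt' (by norm_num)]
      linarith
    rw [e]
    linarith
end
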